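/- Let n, k be positive integers with k ≡ 0 (mod 6), k ≥ 12, (n−2) ≡ 0 (mod k−2) and (n−1)(n−2) ≡ 2(k−2) (mod (k−1)(k−2)). Then D(n,k,3) ≤ J'(n,k,3) − ⌊n/(3k³)⌋, where J'(n,k,3) = ⌊(n/k)·(⌊(n−1)(n−2)/((k−1)(k−2))⌋ − 1)⌋. In particular, the gap J'(n,k,3) − D(n,k,3) grows linearly in n. -/

import Mathlib

/-!
Fix a packing `B` and let the *leave* `H` be the set of triples contained in no block. Counting the
points outside a pair, `k - 2` divides every pair degree in `H`. Counting the ordered pairs of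
distinct points other than `x`, twice the degree of `x` in `H` is `(k - 2) (2 + (r - b) (k - 1))`,
where `b` is the number of blocks through `x` and `r = ⌊(n - 1) (n - 2) / ((k - 1) (k - 2))⌋`. It
is nonzero, so `x` lies in at least `k - 1` pairs covered by `H`, which forces
`e x := r - 1 - b ≥ 0`. The bound improves by `(∑ e) / k`.

Let `G` be the graph of pairs covered by `H`. If `e` vanishes on the ball of radius two around `x`,
then each `y` in that ball has `k + 1` neighbours in `G`, at least `k - 2` of which are common with
any given neighbour of `y`. This forces the ball to be a union of components of `G` with
`k + 2`, `k + 3` or `k + 4` points. Counting the edges and the triples inside it shows that its size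
is divisible by 2 and by 3, which is impossible as `6 ∣ k`. Hence every point is within distance
two of some point with `e ≠ 0`, and as degrees are bounded, `∑ e ≥ n / (3 k ^ 2)`.
-/

/-- The packing number D(n,k,t): the maximum number of k-subsets of an n-set
such that every t-subset is contained in at most one of them. -/
noncomputable def packingNumber (n k t : ℕ) : ℕ :=
  sSup {m | ∃ B : Finset (Finset (Fin n)),
    (∀ b ∈ B, b.card = k) ∧
    (∀ T : Finset (Fin n), T.card = t → (B.filter (fun b => T ⊆ b)).card ≤ 1) ∧
    B.card = m}

open Finset

section Packing

variable {α : Type*}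

lemma two_dvd_card_mul_of_degree_eq [Fintype α] {G : SimpleGraph α} [DecidableRel G.Adj]
    {V : Finset α} {d : ℕ} (hV : ∀ v ∈ V, ∀ w, G.Adj v w → w ∈ V)
    (hdeg : ∀ v ∈ V, G.degree v = d) : 2 ∣ #V * d := by
  classical
  have hinduce : ∀ v : (V : Set α), (G.induce (V : Set α)).degree v = d := fun v => by
    rw [← hdeg v v.2]
    convert SimpleGraph.degree_induce_of_neighborSet_subset (hV v v.2)
  have hsum := (G.induce (V : Set α)).sum_degrees_eq_twice_card_edges
  rw [sum_congr rfl fun v _ => hinduce v, sum_const, card_univ] at hsum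
  simp only [smul_eq_mul, coe_sort_coe, Fintype.card_coe] at hsum
  exact ⟨_, hsum⟩

variable [DecidableEq α]

section Graph

variable [Fintype α] (G : SimpleGraph α) [DecidableRel G.Adj]

/-- The vertices at distance exactly two from `x`. -/
def sphereTwo (x : α) : Finset α := {z | z ≠ x ∧ ¬ G.Adj x z ∧ ∃ y, G.Adj x y ∧ G.Adj y z}

/-- The vertices at distance at most two from `x`. -/
def ballTwo (x : α) : Finset α := insert x (G.neighborFinset x) ∪ sphereTwo G x

variable {G} {x y z : α} {d : ℕ}

lemma mem_sphereTwo :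
    z ∈ sphereTwo G x ↔ z ≠ x ∧ ¬ G.Adj x z ∧ ∃ y, G.Adj x y ∧ G.Adj y z := by
  simp only [sphereTwo, mem_filter, mem_univ, true_and]

lemma mem_ballTwo : z ∈ ballTwo G x ↔ z = x ∨ G.Adj x z ∨ ∃ y, G.Adj x y ∧ G.Adj y z := by
  simp only [ballTwo, mem_union, mem_insert, SimpleGraph.mem_neighborFinset, mem_sphereTwo]
  tauto

lemma card_ballTwo : #(ballTwo G x) = G.degree x + 1 + #(sphereTwo G x) := by
  have hdisj : Disjoint (insert x (G.neighborFinset x)) (sphereTwo G x) := by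
    rw [disjoint_right]
    intro z hz
    obtain ⟨hzx, hxz, -⟩ := mem_sphereTwo.1 hz
    simp [hzx, hxz]
  rw [ballTwo, card_union_of_disjoint hdisj, card_insert_of_notMem (by simp),
    G.card_neighborFinset_eq_degree]

lemma card_neighborFinset_inter_add_card_inter_sphereTwo_lt (hxy : G.Adj x y) :
    #(G.neighborFinset y ∩ G.neighborFinset x) + #(G.neighborFinset y ∩ sphereTwo G x)
      < G.degree y := by
  have hdisj : Disjoint (G.neighborFinset y ∩ G.neighborFinset x)
      (G.neighborFinset y ∩ sphereTwo G x) := by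
    simp only [disjoint_left, mem_inter, SimpleGraph.mem_neighborFinset, mem_sphereTwo]
    tauto
  rw [← card_union_of_disjoint hdisj, ← G.card_neighborFinset_eq_degree]
  refine card_lt_card (ssubset_iff_of_subset ?_ |>.2 ⟨x, ?_, ?_⟩)
  · exact union_subset inter_subset_left inter_subset_left
  · simpa using hxy.symm
  · simp [mem_sphereTwo]

lemma degree_le_card_neighborFinset_inter_add_four
    (hcommon : ∀ y z, G.Adj y z → d ≤ #(G.neighborFinset y ∩ G.neighborFinset z) + 3)
    (hdeg : ∀ y, G.Adj x y → G.degree y = d) (hz : z ∈ sphereTwo G x) :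
    d ≤ #(G.neighborFinset z ∩ G.neighborFinset x) + 4 := by
  obtain ⟨hzx, hxz, y, hxy, hyz⟩ := mem_sphereTwo.1 hz
  set A := G.neighborFinset y ∩ G.neighborFinset x
  set C := G.neighborFinset y ∩ G.neighborFinset z
  have hunion : #(A ∪ C) + 2 ≤ d := by
    have hsub : A ∪ C ⊆ G.neighborFinset y \ {x, z} := by
      intro w
      simp only [A, C, mem_union, mem_inter, mem_sdiff, SimpleGraph.mem_neighborFinset, mem_insert,
        mem_singleton]
      rintro (⟨hyw, hxw⟩ | ⟨hyw, hzw⟩)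
      · exact ⟨hyw, by rintro (rfl | rfl) <;> simp_all⟩
      · exact ⟨hyw, by rintro (rfl | rfl) <;> simp_all [G.adj_comm]⟩
    have hpair : {x, z} ⊆ G.neighborFinset y := by
      simp [insert_subset_iff, hxy.symm, hyz]
    have hcard := card_sdiff_add_card_eq_card hpair
    rw [card_pair hzx.symm, G.card_neighborFinset_eq_degree, hdeg y hxy] at hcard
    have := card_le_card hsub
    omega
  have hinter : #(A ∩ C) ≤ #(G.neighborFinset z ∩ G.neighborFinset x) :=
    card_le_card fun w hw => by simp_all [A, C]
  have := card_union_add_card_inter A C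
  have hA : d ≤ #A + 3 := hcommon y x hxy.symm
  have hC : d ≤ #C + 3 := hcommon y z hyz
  omega

lemma card_sphereTwo_le_two (hd : 13 ≤ d)
    (hcommon : ∀ y z, G.Adj y z → d ≤ #(G.neighborFinset y ∩ G.neighborFinset z) + 3)
    (hdeg : ∀ y ∈ ballTwo G x, G.degree y = d) : #(sphereTwo G x) ≤ 2 := by
  have hdegN : ∀ y, G.Adj x y → G.degree y = d := fun y hy => hdeg y (mem_ballTwo.2 (by simp [hy]))
  have hcount : #(sphereTwo G x) * (d - 4) ≤ #(G.neighborFinset x) * 2 := by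
    refine card_mul_le_card_mul G.Adj (fun z hz => ?_) fun y hy => ?_
    · have habove : (G.neighborFinset x).bipartiteAbove G.Adj z
          = G.neighborFinset z ∩ G.neighborFinset x := by
        ext; simp [bipartiteAbove, and_comm]
      have := degree_le_card_neighborFinset_inter_add_four hcommon hdegN hz
      rw [habove]
      omega
    · have hxy : G.Adj x y := by simpa using hy
      have hbelow : (sphereTwo G x).bipartiteBelow G.Adj y
          = G.neighborFinset y ∩ sphereTwo G x := by
        ext; simp [bipartiteBelow, and_comm, G.adj_comm]
      have := card_neighborFinset_inter_add_card_inter_sphereTwo_lt hxy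
      have := hcommon y x hxy.symm
      have := hdegN y hxy
      rw [hbelow]
      omega
  rw [G.card_neighborFinset_eq_degree, hdeg x (mem_ballTwo.2 (.inl rfl))] at hcount
  by_contra! hlt
  have : 3 * (d - 4) ≤ #(sphereTwo G x) * (d - 4) := Nat.mul_le_mul_right _ hlt
  omega

lemma mem_ballTwo_of_adj (hd : 8 ≤ d)
    (hcommon : ∀ y z, G.Adj y z → d ≤ #(G.neighborFinset y ∩ G.neighborFinset z) + 3)
    (hdeg : ∀ y ∈ ballTwo G x, G.degree y = d) (hy : y ∈ ballTwo G x) (hyz : G.Adj y z) :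
    z ∈ ballTwo G x := by
  have hdegN : ∀ y, G.Adj x y → G.degree y = d := fun y hy => hdeg y (mem_ballTwo.2 (by simp [hy]))
  rcases mem_union.1 hy with hy' | hy'
  · rcases mem_insert.1 hy' with rfl | hxy
    · exact mem_ballTwo.2 (.inr (.inl hyz))
    · exact mem_ballTwo.2 (.inr (.inr ⟨y, by simpa using hxy, hyz⟩))
  by_contra hz
  have hdisj : Disjoint (G.neighborFinset y ∩ G.neighborFinset x)
      (G.neighborFinset y ∩ G.neighborFinset z) := by
    simp only [disjoint_left, mem_inter, SimpleGraph.mem_neighborFinset]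
    rintro w ⟨-, hxw⟩ ⟨-, hzw⟩
    exact hz (mem_ballTwo.2 (.inr (.inr ⟨w, hxw, hzw.symm⟩)))
  have hsub : G.neighborFinset y ∩ G.neighborFinset x ∪ G.neighborFinset y ∩ G.neighborFinset z
      ⊆ G.neighborFinset y := union_subset inter_subset_left inter_subset_left
  have hle := card_le_card hsub
  rw [card_union_of_disjoint hdisj, G.card_neighborFinset_eq_degree, hdeg y hy] at hle
  have := degree_le_card_neighborFinset_inter_add_four hcommon hdegN hy'
  have := hcommon y z hyz
  omega

lemma mem_union_biUnion_of_mem_ballTwo {S : Finset α} (hy : y ∈ ballTwo G x) (hyS : y ∈ S) :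
    x ∈ S ∪ S.biUnion (G.neighborFinset ·) ∪
      (S.biUnion (G.neighborFinset ·) \ S).biUnion (G.neighborFinset ·) := by
  simp only [mem_union, mem_biUnion, mem_sdiff, SimpleGraph.mem_neighborFinset]
  rcases mem_ballTwo.1 hy with rfl | hxy | ⟨w, hxw, hwy⟩
  · exact .inl (.inl hyS)
  · exact .inl (.inr ⟨y, hyS, hxy.symm⟩)
  · by_cases hwS : w ∈ S
    · exact .inl (.inr ⟨w, hwS, hxw.symm⟩)
    · exact .inr ⟨w, ⟨⟨y, hyS, hwy.symm⟩, hwS⟩, hxw.symm⟩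

lemma card_le_mul_sum_of_forall_mem_ballTwo {c : ℕ} (e : α → ℕ)
    (hcover : ∀ x, ∃ y ∈ ballTwo G x, e y ≠ 0)
    (hpos : ∀ x, e x ≠ 0 → G.degree x ≤ c * e x) (hzero : ∀ x, e x = 0 → G.degree x ≤ d) :
    Fintype.card α ≤ (1 + c + c * d) * ∑ x, e x := by
  set S : Finset α := {x | e x ≠ 0}
  set T : Finset α := S.biUnion (G.neighborFinset ·)
  have hSsum : ∑ x ∈ S, e x = ∑ x, e x := sum_filter_ne_zero _
  have hS : #S ≤ ∑ x, e x := by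
    rw [← hSsum, card_eq_sum_ones]
    exact sum_le_sum fun x hx => Nat.one_le_iff_ne_zero.2 (mem_filter.1 hx).2
  have hT : #T ≤ c * ∑ x, e x := by
    rw [← hSsum, mul_sum]
    refine card_biUnion_le.trans (sum_le_sum fun x hx => ?_)
    exact (G.card_neighborFinset_eq_degree x).trans_le (hpos x (mem_filter.1 hx).2)
  have hU : #((T \ S).biUnion (G.neighborFinset ·)) ≤ #T * d := by
    refine (card_biUnion_le_card_mul _ _ d fun x hx => ?_).trans
      (Nat.mul_le_mul_right d (card_le_card sdiff_subset))
    have hx0 : e x = 0 := by simpa [S] using (mem_sdiff.1 hx).2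
    exact (G.card_neighborFinset_eq_degree x).trans_le (hzero x hx0)
  have huniv : univ ⊆ S ∪ T ∪ (T \ S).biUnion (G.neighborFinset ·) := fun x _ => by
    obtain ⟨y, hy, hey⟩ := hcover x
    exact mem_union_biUnion_of_mem_ballTwo hy (by simpa [S] using hey)
  calc Fintype.card α ≤ #(S ∪ T ∪ (T \ S).biUnion (G.neighborFinset ·)) := card_le_card huniv
    _ ≤ #S + #T + #T * d := by
        refine (card_union_le _ _).trans (add_le_add (card_union_le _ _) hU)
    _ ≤ ∑ x, e x + c * ∑ x, e x + c * (∑ x, e x) * d := by gcongr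
    _ = (1 + c + c * d) * ∑ x, e x := by ring

end Graph

section SetDegree

/-- The degree of a set `S` in a set family `F`: the number of members of `F` containing `S`. -/
def setDegree (F : Finset (Finset α)) (S : Finset α) : ℕ := #{b ∈ F | S ⊆ b}

variable {F : Finset (Finset α)} {t : ℕ}

lemma setDegree_ne_zero_iff {S : Finset α} : setDegree F S ≠ 0 ↔ ∃ b ∈ F, S ⊆ b := by
  simp [setDegree, filter_eq_empty_iff]

lemma setDegree_empty : setDegree F ∅ = #F := by
  simp [setDegree]

lemma dvd_card_mul_of_setDegree_eq {V : Finset α} {d : ℕ} (hF : (F : Set (Finset α)).Sized t)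
    (hV : ∀ b ∈ F, Disjoint V b ∨ b ⊆ V) (hdeg : ∀ v ∈ V, setDegree F {v} = d) : t ∣ #V * d := by
  simp only [setDegree, singleton_subset_iff] at hdeg
  rw [← sum_card_inter hdeg]
  refine dvd_sum fun b hb => ?_
  rcases hV b hb with hdisj | hsub
  · simp [disjoint_iff_inter_eq_empty.1 hdisj]
  · rw [inter_eq_right.2 hsub, hF hb]

variable [Fintype α]

lemma sum_setDegree_insert (hF : (F : Set (Finset α)).Sized t) (S : Finset α) :
    ∑ z ∈ Sᶜ, setDegree F (insert z S) = setDegree F S * (t - #S) := by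
  calc ∑ z ∈ Sᶜ, setDegree F (insert z S)
      = ∑ z ∈ Sᶜ, #({b ∈ F | S ⊆ b}.bipartiteAbove (· ∈ ·) z) := by
        simp only [setDegree, bipartiteAbove, filter_filter, insert_subset_iff, and_comm]
    _ = ∑ b ∈ F with S ⊆ b, #(Sᶜ.bipartiteBelow (· ∈ ·) b) :=
        sum_card_bipartiteAbove_eq_sum_card_bipartiteBelow _
    _ = ∑ b ∈ F with S ⊆ b, (t - #S) := by
        refine sum_congr rfl fun b hb => ?_
        obtain ⟨hb, hS⟩ := mem_filter.1 hb
        rw [← hF hb, ← card_sdiff_of_subset hS]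
        congr 1
        ext; simp [bipartiteBelow, and_comm]
    _ = setDegree F S * (t - #S) := by rw [sum_const, smul_eq_mul, setDegree]

end SetDegree

section ShadowGraph

/-- The graph of the pairs covered by the members of a set family `F`. -/
def shadowGraph (F : Finset (Finset α)) : SimpleGraph α where
  Adj x y := x ≠ y ∧ setDegree F {x, y} ≠ 0
  symm := ⟨fun x y h => by rwa [pair_comm, ne_comm]⟩
  loopless := ⟨fun _ h => h.1 rfl⟩

instance (F : Finset (Finset α)) : DecidableRel (shadowGraph F).Adj :=
  fun _ _ => inferInstanceAs (Decidable (_ ∧ _))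

variable {H : Finset (Finset α)} {w : ℕ} {x y : α}

lemma shadowGraph_adj_of_mem {T : Finset α} (hT : T ∈ H) (hx : x ∈ T) (hy : y ∈ T) (hxy : x ≠ y) :
    (shadowGraph H).Adj x y :=
  ⟨hxy, setDegree_ne_zero_iff.2 ⟨T, hT, by simp [insert_subset_iff, hx, hy]⟩⟩

lemma le_setDegree_of_adj (hw : ∀ x y, x ≠ y → w ∣ setDegree H {x, y})
    (hxy : (shadowGraph H).Adj x y) : w ≤ setDegree H {x, y} :=
  Nat.le_of_dvd (Nat.pos_of_ne_zero hxy.2) (hw x y hxy.1)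

lemma disjoint_or_subset_of_forall_adj {V T : Finset α}
    (hV : ∀ v ∈ V, ∀ w, (shadowGraph H).Adj v w → w ∈ V) (hT : T ∈ H) : Disjoint V T ∨ T ⊆ V := by
  refine or_iff_not_imp_left.2 fun hmeet z hz => ?_
  obtain ⟨y, hyV, hyT⟩ := not_disjoint_iff.1 hmeet
  by_cases hyz : y = z
  · exact hyz ▸ hyV
  · exact hV y hyV z (shadowGraph_adj_of_mem hT hyT hz hyz)

variable [Fintype α]

lemma setDegree_pair_le_card_neighborFinset_inter (hH : (H : Set (Finset α)).Sized 3)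
    (hxy : x ≠ y) : setDegree H {x, y} ≤
      #((shadowGraph H).neighborFinset x ∩ (shadowGraph H).neighborFinset y) := by
  refine (card_le_card (t := image (insert · {x, y}) _) fun T hT => ?_).trans card_image_le
  obtain ⟨hTH, hsub⟩ := mem_filter.1 hT
  obtain ⟨z, hz, rfl⟩ := exists_eq_insert_iff.2 ⟨hsub, by rw [card_pair hxy, hH hTH]⟩
  simp only [mem_insert, mem_singleton, not_or] at hz
  refine mem_image_of_mem _ (mem_inter.2 ⟨?_, ?_⟩) <;> rw [SimpleGraph.mem_neighborFinset]
  · exact shadowGraph_adj_of_mem hTH (by simp) (by simp) (Ne.symm hz.1)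
  · exact shadowGraph_adj_of_mem hTH (by simp) (by simp) (Ne.symm hz.2)

lemma setDegree_pair_lt_degree (hH : (H : Set (Finset α)).Sized 3)
    (hxy : (shadowGraph H).Adj x y) : setDegree H {x, y} < (shadowGraph H).degree x := by
  refine (setDegree_pair_le_card_neighborFinset_inter hH hxy.1).trans_lt ?_
  rw [← SimpleGraph.card_neighborFinset_eq_degree]
  exact card_lt_card (ssubset_iff_of_subset inter_subset_left |>.2 ⟨y, by simpa, by simp⟩)

lemma sum_neighborFinset_setDegree_pair (hH : (H : Set (Finset α)).Sized 3) (x : α) :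
    ∑ y ∈ (shadowGraph H).neighborFinset x, setDegree H {x, y} = 2 * setDegree H {x} := by
  have hsum := sum_setDegree_insert hH {x}
  rw [card_singleton, mul_comm] at hsum
  rw [← hsum]
  refine sum_subset_zero_on_sdiff (fun y hy => ?_) (fun y hy => ?_) fun y _ => by rw [pair_comm]
  · simpa using ((SimpleGraph.mem_neighborFinset _ _ _).1 hy).1.symm
  · simp only [mem_sdiff, mem_compl, mem_singleton, SimpleGraph.mem_neighborFinset] at hy
    by_contra h
    exact hy.2 ⟨Ne.symm hy.1, by rwa [pair_comm]⟩

lemma mul_degree_le_two_mul_setDegree (hH : (H : Set (Finset α)).Sized 3)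
    (hw : ∀ x y, x ≠ y → w ∣ setDegree H {x, y}) (x : α) :
    w * (shadowGraph H).degree x ≤ 2 * setDegree H {x} := by
  rw [← sum_neighborFinset_setDegree_pair hH, mul_comm, ← SimpleGraph.card_neighborFinset_eq_degree,
    ← smul_eq_mul]
  exact card_nsmul_le_sum _ _ _ fun y hy => le_setDegree_of_adj hw (by simpa using hy)

lemma add_one_le_degree_shadowGraph (hH : (H : Set (Finset α)).Sized 3)
    (hw : ∀ x y, x ≠ y → w ∣ setDegree H {x, y}) (hx : setDegree H {x} ≠ 0) :
    w + 1 ≤ (shadowGraph H).degree x := by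
  have hsum : ∑ y ∈ (shadowGraph H).neighborFinset x, setDegree H {x, y} ≠ 0 := by
    rw [sum_neighborFinset_setDegree_pair hH]
    omega
  obtain ⟨y, hy, -⟩ := exists_ne_zero_of_sum_ne_zero hsum
  rw [SimpleGraph.mem_neighborFinset] at hy
  exact (le_setDegree_of_adj hw hy).trans_lt (setDegree_pair_lt_degree hH hy)

lemma degree_shadowGraph_eq (hH : (H : Set (Finset α)).Sized 3)
    (hw : ∀ x y, x ≠ y → w ∣ setDegree H {x, y}) (hw3 : 3 ≤ w)
    (hx : 2 * setDegree H {x} = w * (w + 3)) : (shadowGraph H).degree x = w + 3 := by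
  have hle : (shadowGraph H).degree x ≤ w + 3 :=
    Nat.le_of_mul_le_mul_left (hx ▸ mul_degree_le_two_mul_setDegree hH hw x) (by omega)
  have hpair : ∀ y ∈ (shadowGraph H).neighborFinset x, setDegree H {x, y} = w := by
    intro y hy
    rw [SimpleGraph.mem_neighborFinset] at hy
    have hlt := setDegree_pair_lt_degree hH hy
    exact Nat.eq_of_dvd_of_lt_two_mul hy.2 (hw x y hy.1) (by omega)
  have hsum := sum_neighborFinset_setDegree_pair hH x
  rw [sum_congr rfl hpair, hx, sum_const, smul_eq_mul, mul_comm,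
    SimpleGraph.card_neighborFinset_eq_degree] at hsum
  exact Nat.eq_of_mul_eq_mul_left (by omega) hsum

lemma exists_mem_ballTwo_two_mul_setDegree_ne (hH : (H : Set (Finset α)).Sized 3)
    (hw : ∀ x y, x ≠ y → w ∣ setDegree H {x, y}) (hw10 : 10 ≤ w) (hmod : w % 6 = 4) (x : α) :
    ∃ y ∈ ballTwo (shadowGraph H) x, 2 * setDegree H {y} ≠ w * (w + 3) := by
  by_contra! hgood
  set V := ballTwo (shadowGraph H) x
  have hdeg : ∀ y ∈ V, (shadowGraph H).degree y = w + 3 := fun y hy =>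
    degree_shadowGraph_eq hH hw (by omega) (hgood y hy)
  have hcommon : ∀ y z, (shadowGraph H).Adj y z → w + 3 ≤
      #((shadowGraph H).neighborFinset y ∩ (shadowGraph H).neighborFinset z) + 3 := fun y z hyz =>
    Nat.add_le_add_right ((le_setDegree_of_adj hw hyz).trans
      (setDegree_pair_le_card_neighborFinset_inter hH hyz.1)) 3
  have hclosed : ∀ y ∈ V, ∀ z, (shadowGraph H).Adj y z → z ∈ V := fun y hy z hyz =>
    mem_ballTwo_of_adj (by omega) hcommon hdeg hy hyz
  have hcard : #V = w + 4 + #(sphereTwo (shadowGraph H) x) := by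
    rw [card_ballTwo, hdeg x (mem_ballTwo.2 (.inl rfl))]
  have hsphere := card_sphereTwo_le_two (by omega) hcommon hdeg
  have htwo : 2 ∣ #V := by
    refine Nat.Coprime.dvd_of_dvd_mul_right ?_ (two_dvd_card_mul_of_degree_eq hclosed hdeg)
    rw [Nat.coprime_two_left, Nat.odd_iff]
    omega
  have hthree : 3 ∣ #V := by
    have hx := hgood x (mem_ballTwo.2 (.inl rfl))
    have hdvd : 3 ∣ #V * setDegree H {x} :=
      dvd_card_mul_of_setDegree_eq hH (fun T hT => disjoint_or_subset_of_forall_adj hclosed hT)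
        fun v hv => by have := hgood v hv; omega
    have hcop : Nat.Coprime 3 (2 * setDegree H {x}) := by
      rw [hx, Nat.coprime_mul_iff_right]
      constructor <;> rw [Nat.prime_three.coprime_iff_not_dvd] <;> omega
    exact (Nat.Coprime.coprime_mul_left_right hcop).dvd_of_dvd_mul_right hdvd
  omega

end ShadowGraph

/-- A `t`-`(n, k, 1)` packing on the point set `α`: a family of `k`-subsets such that every
`t`-subset is contained in at most one of them. -/
structure IsPacking (k t : ℕ) (B : Finset (Finset α)) : Prop where
  sized : (B : Set (Finset α)).Sized k
  setDegree_le_one : ∀ T : Finset α, #T = t → setDegree B T ≤ 1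

lemma exists_isPacking_card_eq_packingNumber (n k t : ℕ) :
    ∃ B : Finset (Finset (Fin n)), IsPacking k t B ∧ #B = packingNumber n k t := by
  obtain ⟨B, hk, ht, hcard⟩ := Nat.sSup_mem
    (s := {m | ∃ B : Finset (Finset (Fin n)), (∀ b ∈ B, #b = k) ∧
      (∀ T : Finset (Fin n), #T = t → #{b ∈ B | T ⊆ b} ≤ 1) ∧ #B = m})
    ⟨0, ∅, by simp⟩ ⟨_, by rintro _ ⟨B, -, -, rfl⟩; exact card_le_univ B⟩
  exact ⟨B, ⟨hk, ht⟩, hcard⟩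

section Leave

variable [Fintype α]

/-- The leave of a `t`-packing `B`: the `t`-subsets contained in no member of `B`. -/
def leave (B : Finset (Finset α)) (t : ℕ) : Finset (Finset α) :=
  {T ∈ powersetCard t univ | setDegree B T = 0}

variable {B : Finset (Finset α)} {k t : ℕ}

lemma sized_leave : (leave B t : Set (Finset α)).Sized t := fun _ hT =>
  (mem_powersetCard.1 (mem_filter.1 hT).1).2

lemma setDegree_leave {T : Finset α} (hT : #T = t) :
    setDegree (leave B t) T = if setDegree B T = 0 then 1 else 0 := by
  have hfilter : {T' ∈ leave B t | T ⊆ T'} = if setDegree B T = 0 then {T} else ∅ := by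
    ext T'
    have : T' ∈ leave B t ∧ T ⊆ T' ↔ T' = T ∧ setDegree B T = 0 := by
      constructor
      · rintro ⟨hT', hsub⟩
        obtain rfl := eq_of_subset_of_card_le hsub (by rw [hT, sized_leave hT'])
        exact ⟨rfl, (mem_filter.1 hT').2⟩
      · rintro ⟨rfl, h0⟩
        exact ⟨mem_filter.2 ⟨by simp [hT], h0⟩, subset_rfl⟩
    rw [mem_filter, this]
    split_ifs <;> simp_all
  rw [setDegree, hfilter]
  split_ifs <;> simp

namespace IsPacking

lemma setDegree_add_setDegree_leave (hB : IsPacking k t B) {T : Finset α} (hT : #T = t) :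
    setDegree B T + setDegree (leave B t) T = 1 := by
  have := hB.setDegree_le_one T hT
  rw [setDegree_leave hT]
  split_ifs <;> omega

lemma setDegree_mul_add_setDegree_leave (hB : IsPacking k t B) {S : Finset α} (hS : #S + 1 = t) :
    setDegree B S * (k - #S) + setDegree (leave B t) S = Fintype.card α - #S := by
  have hone : t - #S = 1 := by omega
  rw [← sum_setDegree_insert hB.sized S, ← mul_one (setDegree (leave B t) S), ← hone,
    ← sum_setDegree_insert sized_leave S, ← sum_add_distrib, ← card_compl, card_eq_sum_ones]
  refine sum_congr rfl fun z hz => hB.setDegree_add_setDegree_leave ?_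
  rw [card_insert_of_notMem (mem_compl.1 hz), hS]

lemma setDegree_mul_add_two_mul_setDegree_leave (hB : IsPacking k t B) {S : Finset α}
    (hS : #S + 2 = t) :
    setDegree B S * ((k - #S) * (k - (#S + 1))) + 2 * setDegree (leave B t) S
      = (Fintype.card α - #S) * (Fintype.card α - (#S + 1)) := by
  have htwo : t - #S = 2 := by omega
  rw [← mul_assoc, ← sum_setDegree_insert hB.sized S, mul_comm 2, ← htwo,
    ← sum_setDegree_insert sized_leave S, sum_mul, ← sum_add_distrib, ← card_compl, ← smul_eq_mul]
  refine sum_eq_card_nsmul fun z hz => ?_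
  rw [← card_insert_of_notMem (mem_compl.1 hz)]
  refine hB.setDegree_mul_add_setDegree_leave ?_
  rw [card_insert_of_notMem (mem_compl.1 hz), ← hS]

lemma dvd_setDegree_leave_pair (hB : IsPacking k 3 B) (hdvd : (k - 2) ∣ Fintype.card α - 2)
    (x y : α) (hxy : x ≠ y) : (k - 2) ∣ setDegree (leave B 3) {x, y} := by
  have hpair := hB.setDegree_mul_add_setDegree_leave (S := {x, y}) (by rw [card_pair hxy])
  rw [card_pair hxy] at hpair
  exact (Nat.dvd_add_right (dvd_mul_left _ _)).1 (hpair ▸ hdvd)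

lemma sum_setDegree_singleton (hB : IsPacking k t B) : ∑ x, setDegree B {x} = #B * k := by
  simpa [setDegree_empty] using sum_setDegree_insert hB.sized ∅

lemma exists_two_mul_setDegree_leave_eq (hB : IsPacking k 3 B) (hk : 4 ≤ k)
    (hdvd : (k - 2) ∣ Fintype.card α - 2) {r : ℕ}
    (hr : (Fintype.card α - 1) * (Fintype.card α - 2) = r * ((k - 1) * (k - 2)) + 2 * (k - 2))
    (x : α) : ∃ e, setDegree B {x} + e + 1 = r ∧
      2 * setDegree (leave B 3) {x} = (k - 2) * (k + 1 + e * (k - 1)) := by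
  have hcount := hB.setDegree_mul_add_two_mul_setDegree_leave (S := {x}) (by rw [card_singleton])
  simp only [card_singleton, Nat.reduceAdd] at hcount
  rw [hr] at hcount
  have hpairs := hB.dvd_setDegree_leave_pair hdvd
  obtain ⟨w, rfl⟩ : ∃ w, k = w + 2 := ⟨k - 2, by omega⟩
  simp only [Nat.add_sub_cancel, Nat.reduceSubDiff] at hcount hpairs ⊢
  have hne : setDegree (leave B 3) {x} ≠ 0 := by
    intro h0
    have heq : setDegree B {x} * (w + 1) = r * (w + 1) + 2 :=
      Nat.eq_of_mul_eq_mul_right (show 0 < w by omega) (by rw [h0] at hcount; linarith)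
    have : w + 1 ∣ 2 := (Nat.dvd_add_right (dvd_mul_left _ r)).1 (heq ▸ dvd_mul_left _ _)
    have := Nat.le_of_dvd two_pos this
    omega
  have hleave : w * (w + 1) ≤ 2 * setDegree (leave B 3) {x} :=
    (Nat.mul_le_mul_left w (add_one_le_degree_shadowGraph sized_leave hpairs hne)).trans
      (mul_degree_le_two_mul_setDegree sized_leave hpairs x)
  have hlt : setDegree B {x} < r := by
    by_contra! hle
    have : r * ((w + 1) * w) ≤ setDegree B {x} * ((w + 1) * w) := Nat.mul_le_mul_right _ hle
    nlinarith
  obtain ⟨e, rfl⟩ := Nat.exists_eq_add_of_lt hlt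
  exact ⟨e, rfl, by linarith⟩

lemma exists_excess_card_le (hB : IsPacking k 3 B) (hk : 12 ≤ k) (h6 : k % 6 = 0)
    (hdvd : (k - 2) ∣ Fintype.card α - 2) {r : ℕ}
    (hr : (Fintype.card α - 1) * (Fintype.card α - 2) = r * ((k - 1) * (k - 2)) + 2 * (k - 2)) :
    ∃ e : α → ℕ, (∀ x, setDegree B {x} + e x + 1 = r) ∧
      Fintype.card α ≤ 3 * k ^ 2 * ∑ x, e x := by
  choose e he hleave using hB.exists_two_mul_setDegree_leave_eq (by omega) hdvd hr
  refine ⟨e, he, ?_⟩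
  have hpairs := hB.dvd_setDegree_leave_pair hdvd
  have hdegree : ∀ x, (shadowGraph (leave B 3)).degree x ≤ k + 1 + e x * (k - 1) := fun x =>
    Nat.le_of_mul_le_mul_left (hleave x ▸ mul_degree_le_two_mul_setDegree sized_leave hpairs x)
      (by omega)
  have hcover : ∀ x, ∃ y ∈ ballTwo (shadowGraph (leave B 3)) x, e y ≠ 0 := by
    intro x
    obtain ⟨y, hy, hne⟩ :=
      exists_mem_ballTwo_two_mul_setDegree_ne sized_leave hpairs (by omega) (by omega) x
    refine ⟨y, hy, fun h0 => hne ?_⟩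
    rw [hleave, h0, show k - 2 + 3 = k + 1 by omega, zero_mul, add_zero]
  refine (card_le_mul_sum_of_forall_mem_ballTwo (c := 2 * k) (d := k + 1) e hcover
    (fun x hx => (hdegree x).trans ?_) fun x hx => by simpa [hx] using hdegree x).trans ?_
  · calc k + 1 + e x * (k - 1) ≤ e x * (k + 1) + e x * (k - 1) := by
          gcongr
          exact Nat.le_mul_of_pos_left _ (Nat.pos_of_ne_zero hx)
      _ = 2 * k * e x := by
          rw [← mul_add, show k + 1 + (k - 1) = 2 * k by omega, mul_comm]
  · gcongr
    nlinarith

lemma card_add_card_div_le (hB : IsPacking k 3 B) (hk : 12 ≤ k) (h6 : k % 6 = 0)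
    (hdvd : (k - 2) ∣ Fintype.card α - 2) {r : ℕ}
    (hr : (Fintype.card α - 1) * (Fintype.card α - 2) = r * ((k - 1) * (k - 2)) + 2 * (k - 2)) :
    #B + Fintype.card α / (3 * k ^ 3) ≤ Fintype.card α * (r - 1) / k := by
  obtain ⟨e, he, hcard⟩ := hB.exists_excess_card_le hk h6 hdvd hr
  have htotal : #B * k + ∑ x, e x = Fintype.card α * (r - 1) := by
    rw [← hB.sum_setDegree_singleton, ← sum_add_distrib, ← smul_eq_mul, ← card_univ]
    exact sum_eq_card_nsmul fun x _ => by have := he x; omega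
  have hsum : Fintype.card α / (3 * k ^ 3) * k ≤ ∑ x, e x := by
    refine Nat.le_of_mul_le_mul_left (c := 3 * k ^ 2) ?_ (by positivity)
    calc 3 * k ^ 2 * (Fintype.card α / (3 * k ^ 3) * k)
        = Fintype.card α / (3 * k ^ 3) * (3 * k ^ 3) := by ring
      _ ≤ Fintype.card α := Nat.div_mul_le_self _ _
      _ ≤ 3 * k ^ 2 * ∑ x, e x := hcard
  rw [Nat.le_div_iff_mul_le (by omega), add_mul, ← htotal]
  exact Nat.add_le_add_left hsum _

end IsPacking

end Leave

end Packing

theorem stmt12 (n k : ℕ) (hn : 0 < n) (hk : 12 ≤ k) (h6 : k % 6 = 0)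
    (h1 : (k - 2) ∣ (n - 2))
    (h2 : (n - 1) * (n - 2) ≡ 2 * (k - 2) [MOD (k - 1) * (k - 2)]) :
    packingNumber n k 3 + n / (3 * k ^ 3) ≤
      n * ((n - 1) * (n - 2) / ((k - 1) * (k - 2)) - 1) / k := by
  obtain ⟨B, hB, hcard⟩ := exists_isPacking_card_eq_packingNumber n k 3
  have hlt : 2 * (k - 2) < (k - 1) * (k - 2) := Nat.mul_lt_mul_of_pos_right (by omega) (by omega)
  have hr : (n - 1) * (n - 2)
      = (n - 1) * (n - 2) / ((k - 1) * (k - 2)) * ((k - 1) * (k - 2)) + 2 * (k - 2) := by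
    conv_lhs => rw [← Nat.div_add_mod' ((n - 1) * (n - 2)) ((k - 1) * (k - 2)), h2,
      Nat.mod_eq_of_lt hlt]
  rw [← hcard]
  simpa only [Fintype.card_fin] using
    hB.card_add_card_div_le hk h6 (by rwa [Fintype.card_fin]) (by rwa [Fintype.card_fin])
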